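/- Let R be a one-dimensional Cohen-Macaulay local ring with canonical module \omega. Suppose there is a non-split short exact sequence 0 \to F \to M \oplus G \to \omega \to 0 with F, G finitely generated free, where M is torsion-free and Ext^1_R(M, R) = 0. If M \otimes_R \omega is torsion-free, then M \otimes_R M is torsion-free. -/

import Mathlib

open CategoryTheory IsLocalRing

open scoped TensorProduct

/-- A canonical (dualizing) module over a Noetherian local ring: a finitely generated
module of finite injective dimension such that the natural map `R → End_R(ω)` is
bijective and `Ext^i(ω, ω) = 0` for all `i ≥ 1`. -/
def IsCanonicalModule (R : Type) [CommRing R]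
    (ω : Type) [AddCommGroup ω] [Module R ω] : Prop :=
  Module.Finite R ω ∧
  (∃ n : ℕ, ∀ (M : ModuleCat.{0} R) (i : ℕ), n < i →
    Subsingleton (((_root_.Ext R (ModuleCat.{0} R) i).obj
      (Opposite.op M)).obj (ModuleCat.of R ω))) ∧
  Function.Bijective (LinearMap.lsmul R ω) ∧
  (∀ i : ℕ, 1 ≤ i →
    Subsingleton (((_root_.Ext R (ModuleCat.{0} R) i).obj
      (Opposite.op (ModuleCat.of R ω))).obj (ModuleCat.of R ω)))

/-!
Every positive `Ext` of a finitely generated module into `ω` is torsion: by descending induction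
on the degree it suffices to treat `R ⧸ p`, which is killed by a regular element, or else embeds
in `R` with `p` minimal, as `R` has no embedded primes. So a map from a submodule of `L` to `ω`
extends to `L` after multiplication by a regular element, and maps to `ω` separate the points of
every finitely generated torsion-free module `L`.

Moreover `Ext¹(M, R) = 0` forces `Ext¹(ω, Hom(M, ω)) = 0`: for a free cover `K → P → M` every map
`ω → Hom(K, ω)` lifts to `Hom(P, ω)`, being dual to a map `K → End ω = R`. By adjunction every map
`M ⊗ F → ω` extends to `M ⊗ B` when `0 → F → B → ω → 0` is exact. Since such maps separate points
of `M ⊗ F`, the map `M ⊗ F → M ⊗ B` is injective, and `M ⊗ B` is an extension of the torsion-free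
module `M ⊗ ω` by `M ⊗ F`.
-/

open Abelian
open scoped nonZeroDivisors

universe w v u

section TorsionFree

variable {R : Type*} [CommRing R]

/-- Unlike `Submodule.isTorsionFree_iff_torsion_eq_bot`, this allows zero divisors in `R`. -/
lemma torsion_eq_bot_iff_isTorsionFree {M : Type*} [AddCommGroup M] [Module R M] :
    Submodule.torsion R M = ⊥ ↔ Module.IsTorsionFree R M := by
  refine ⟨fun h ↦ ⟨fun r hr ↦ isSMulRegular_iff_right_eq_zero_of_smul.2 fun m hm ↦ ?_⟩,
    fun h ↦ (Submodule.eq_bot_iff _).2 ?_⟩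
  · exact (Submodule.eq_bot_iff _).1 h m ⟨⟨r, isRegular_iff_mem_nonZeroDivisors.1 hr⟩, hm⟩
  · rintro m ⟨r, hrm⟩
    exact (isRegular_iff_mem_nonZeroDivisors.2 r.2).smul_eq_zero_iff_right.1 hrm

variable {A B C : Type*} [AddCommGroup A] [Module R A] [AddCommGroup B] [Module R B]
  [AddCommGroup C] [Module R C] {f : A →ₗ[R] B} {g : B →ₗ[R] C}

lemma isTorsionFree_of_exact [Module.IsTorsionFree R A] [Module.IsTorsionFree R C]
    (hf : Function.Injective f) (hfg : Function.Exact f g) : Module.IsTorsionFree R B where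
  isSMulRegular r hr := by
    refine isSMulRegular_iff_right_eq_zero_of_smul.2 fun y hy ↦ ?_
    have hgy : g y = 0 := hr.smul_eq_zero_iff_right.1 (by rw [← map_smul, hy, map_zero])
    obtain ⟨x, rfl⟩ := (hfg y).1 hgy
    have hx : x = 0 := hr.smul_eq_zero_iff_right.1 (hf (by rw [map_smul, hy, map_zero]))
    rw [hx, map_zero]

lemma isTorsion_of_exact (hA : Module.IsTorsion R A) (hC : Module.IsTorsion R C)
    (hfg : Function.Exact f g) : Module.IsTorsion R B := by
  intro y
  obtain ⟨r, hr⟩ := @hC (g y)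
  obtain ⟨x, hx⟩ := (hfg (r • y)).1 (by simpa only [Submonoid.smul_def, map_smul] using hr)
  obtain ⟨s, hs⟩ := @hA x
  exact ⟨s * r, by
    rw [mul_smul, ← hx, Submonoid.smul_def, ← map_smul, ← Submonoid.smul_def, hs, map_zero]⟩

lemma isTorsionFree_tensorProduct_of_flat [Module.IsTorsionFree R A] [Module.Flat R B] :
    Module.IsTorsionFree R (A ⊗[R] B) where
  isSMulRegular _ hr := (hr.isSMulRegular (M := A)).rTensor B

end TorsionFree

section EmbeddedPrimes

variable {R : Type*} [CommRing R] [IsNoetherianRing R]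

lemma associatedPrimes_subset_minimalPrimes_of_ringKrullDim_le_one [IsLocalRing R]
    (hdim : ringKrullDim R ≤ 1) (hreg : ∃ x ∈ maximalIdeal R, x ∈ R⁰) :
    associatedPrimes R R ⊆ minimalPrimes R := by
  have : Ring.KrullDimLE 1 R := Ring.krullDimLE_iff.2 hdim
  intro p hp
  refine (Ring.krullDimLE_one_iff.1 inferInstance p hp.isPrime).resolve_right fun hmax ↦ ?_
  obtain ⟨x, hxm, hx⟩ := hreg
  rw [← IsLocalRing.eq_maximalIdeal hmax] at hxm
  have hx' : x ∈ (R⁰ : Set R)ᶜ :=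
    biUnion_associatedPrimes_eq_compl_nonZeroDivisors R ▸ Set.mem_biUnion hp hxm
  exact hx' hx

lemma disjoint_nonZeroDivisors_of_mem_associatedPrimes {L : Type*} [AddCommGroup L] [Module R L]
    [Module.IsTorsionFree R L] {p : Ideal R} (hp : p ∈ associatedPrimes R L) :
    Disjoint (p : Set R) R⁰ := by
  refine Set.disjoint_left.2 fun r hrp hr ↦ ?_
  obtain ⟨x, hx, hrx⟩ : r ∈ {r : R | ∃ x : L, x ≠ 0 ∧ r • x = 0} :=
    biUnion_associatedPrimes_eq_zero_divisors R L ▸ Set.mem_biUnion hp hrp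
  exact hx ((isRegular_iff_mem_nonZeroDivisors.2 hr).smul_eq_zero_iff_right.1 hrx)

variable (hR : associatedPrimes R R ⊆ minimalPrimes R)
include hR

lemma mem_minimalPrimes_of_disjoint_nonZeroDivisors {p : Ideal R} [p.IsPrime]
    (hp : Disjoint (p : Set R) R⁰) : p ∈ minimalPrimes R := by
  have hpU : (p : Set R) ⊆ ⋃ q ∈ associatedPrimes R R, q := by
    rw [biUnion_associatedPrimes_eq_compl_nonZeroDivisors]
    exact hp.subset_compl_right
  obtain ⟨q, hq, hpq⟩ := (Ideal.subset_union_prime_finite (associatedPrimes.finite R R)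
    (f := id) p p fun q hq _ _ ↦ hq.isPrime).1 hpU
  have hmin : Minimal (fun I : Ideal R ↦ I.IsPrime ∧ ⊥ ≤ I) q := hR hq
  rw [hmin.eq_of_le ⟨‹p.IsPrime›, bot_le⟩ hpq]
  exact hR hq

lemma exists_injective_quotient_of_disjoint_nonZeroDivisors (W : Type*) [AddCommGroup W]
    [Module R W] [Module.Finite R W] [FaithfulSMul R W] {p : Ideal R} [p.IsPrime]
    (hp : Disjoint (p : Set R) R⁰) : ∃ f : R ⧸ p →ₗ[R] W, Function.Injective f := by
  refine ((isAssociatedPrime_iff_exists_injective_linearMap p W).1 ?_).2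
  apply Module.associatedPrimes.minimalPrimes_annihilator_subset_associatedPrimes R W
  rw [Module.annihilator_eq_bot.2 ‹_›]
  exact mem_minimalPrimes_of_disjoint_nonZeroDivisors hR hp

end EmbeddedPrimes

section AbelianCategory

variable {C : Type u} [Category.{v} C] [Abelian C] [HasExt.{w} C]

lemma subsingleton_abelianExt_of_subsingleton_ext {R : Type*} [Ring R] [Linear R C]
    [EnoughProjectives C] {X Y : C} {n : ℕ}
    (h : Subsingleton (((_root_.Ext R C (n + 1)).obj (Opposite.op X)).obj Y)) :
    Subsingleton (Abelian.Ext.{w} X Y (n + 1)) := by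
  let P := projectiveResolution X
  have hP : (P.complex.linearYonedaObj R Y).ExactAt (n + 1) := by
    rw [HomologicalComplex.exactAt_iff_isZero_homology]
    exact (ModuleCat.isZero_of_subsingleton _).of_iso (P.isoExt (R := R) (n + 1) Y).symm
  rw [HomologicalComplex.exactAt_iff' _ n (n + 1) (n + 2) (by simp) (by simp),
    ShortComplex.moduleCat_exact_iff] at hP
  refine subsingleton_of_forall_eq 0 fun e ↦ ?_
  obtain ⟨f, hf, rfl⟩ := P.extMk_surjective e (n + 2) rfl
  exact (P.extMk_eq_zero_iff f (n + 2) rfl hf n rfl).2 (hP f hf)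

lemma isTorsion_ext_of_smul_id_eq_zero {R : Type*} [CommRing R] [Linear R C] {X : C} {r : R}
    (hr : r ∈ R⁰) (hX : r • 𝟙 X = 0) (Y : C) (i : ℕ) :
    Module.IsTorsion R (Abelian.Ext X Y i) := by
  intro e
  refine ⟨⟨r, hr⟩, ?_⟩
  calc r • e = (Ext.mk₀ (r • 𝟙 X)).comp e (zero_add i) := by
        rw [Ext.mk₀_smul, Ext.smul_comp, Ext.mk₀_id_comp]
    _ = 0 := by rw [hX, Ext.mk₀_zero, Ext.zero_comp]

variable {S : ShortComplex C} (hS : S.ShortExact)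
include hS

lemma exists_f_comp_eq_of_extClass_comp_eq_zero {Y : C} (φ : S.X₁ ⟶ Y)
    (hφ : hS.extClass.comp (Ext.mk₀ φ) (add_zero 1) = 0) : ∃ ψ : S.X₂ ⟶ Y, S.f ≫ ψ = φ := by
  obtain ⟨e, he⟩ := Ext.contravariant_sequence_exact₁ hS Y (Ext.mk₀ φ) (add_zero 1) hφ
  obtain ⟨ψ, rfl⟩ := (Ext.mk₀_bijective _ _).2 e
  exact ⟨ψ, (Ext.mk₀_bijective _ _).1 (by rw [← Ext.mk₀_comp_mk₀, he])⟩

lemma subsingleton_ext_one_of_forall_exists_comp_g_eq {X : C}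
    [Subsingleton (Abelian.Ext X S.X₂ 1)]
    (hlift : ∀ φ : X ⟶ S.X₃, ∃ ψ : X ⟶ S.X₂, ψ ≫ S.g = φ) :
    Subsingleton (Abelian.Ext X S.X₁ 1) := by
  refine subsingleton_of_forall_eq 0 fun e ↦ ?_
  obtain ⟨d, rfl⟩ := Ext.covariant_sequence_exact₁ X hS e (Subsingleton.elim _ _) (zero_add 1)
  obtain ⟨φ, rfl⟩ := (Ext.mk₀_bijective _ _).2 d
  obtain ⟨ψ, rfl⟩ := hlift φ
  rw [← Ext.mk₀_comp_mk₀, Ext.comp_assoc (h₁₂ := zero_add 0) (h₂₃ := zero_add 1) (h := by omega),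
    hS.comp_extClass, Ext.comp_zero]

variable {R : Type*} [CommRing R] [Linear R C] {Y : C} {i : ℕ}

lemma isTorsion_ext_X₁ (h₂ : Module.IsTorsion R (Abelian.Ext S.X₂ Y i))
    (h₃ : Module.IsTorsion R (Abelian.Ext S.X₃ Y (1 + i))) :
    Module.IsTorsion R (Abelian.Ext S.X₁ Y i) := by
  refine isTorsion_of_exact h₂ h₃
    (f := Ext.bilinearCompOfLinear R _ _ Y _ _ _ (zero_add i) (Ext.mk₀ S.f))
    (g := Ext.bilinearCompOfLinear R _ _ Y _ _ _ rfl hS.extClass)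
    fun e ↦ ⟨Ext.contravariant_sequence_exact₁ hS Y e rfl, ?_⟩
  rintro ⟨e, rfl⟩
  simp

lemma isTorsion_ext_X₂ (h₁ : Module.IsTorsion R (Abelian.Ext S.X₁ Y i))
    (h₃ : Module.IsTorsion R (Abelian.Ext S.X₃ Y i)) :
    Module.IsTorsion R (Abelian.Ext S.X₂ Y i) := by
  refine isTorsion_of_exact h₃ h₁
    (f := Ext.bilinearCompOfLinear R _ _ Y _ _ _ (zero_add i) (Ext.mk₀ S.g))
    (g := Ext.bilinearCompOfLinear R _ _ Y _ _ _ (zero_add i) (Ext.mk₀ S.f))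
    fun e ↦ ⟨Ext.contravariant_sequence_exact₂ hS Y e, ?_⟩
  rintro ⟨e, rfl⟩
  simp

end AbelianCategory

section ExtendLinearMap

variable {R : Type u} [CommRing R] {A B C W : Type u} [AddCommGroup A] [Module R A]
  [AddCommGroup B] [Module R B] [AddCommGroup C] [Module R C] [AddCommGroup W] [Module R W]
  {a : A →ₗ[R] B} {b : B →ₗ[R] C} (ha : Function.Injective a) (hab : Function.Exact a b)
  (hb : Function.Surjective b)

include ha hab hb

lemma exists_comp_eq_of_subsingleton_ext
    [Subsingleton (Abelian.Ext (ModuleCat.of R C) (ModuleCat.of R W) 1)] (f : A →ₗ[R] W) :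
    ∃ h : B →ₗ[R] W, h ∘ₗ a = f := by
  have hS : (ModuleCat.shortComplexOfCompEqZero a b hab.linearMap_comp_eq_zero).ShortExact :=
    ModuleCat.shortComplex_shortExact _ hab ha hb
  obtain ⟨h, hh⟩ := exists_f_comp_eq_of_extClass_comp_eq_zero hS (ModuleCat.ofHom f)
    (Subsingleton.elim _ _)
  exact ⟨h.hom, congrArg ModuleCat.Hom.hom hh⟩

lemma exists_comp_eq_smul_of_isTorsion_ext
    (htors : Module.IsTorsion R (Abelian.Ext (ModuleCat.of R C) (ModuleCat.of R W) 1))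
    (f : A →ₗ[R] W) : ∃ r ∈ R⁰, ∃ h : B →ₗ[R] W, h ∘ₗ a = r • f := by
  have hS : (ModuleCat.shortComplexOfCompEqZero a b hab.linearMap_comp_eq_zero).ShortExact :=
    ModuleCat.shortComplex_shortExact _ hab ha hb
  obtain ⟨r, hr⟩ := @htors (hS.extClass.comp (Ext.mk₀ (ModuleCat.ofHom f)) (add_zero 1))
  obtain ⟨h, hh⟩ := exists_f_comp_eq_of_extClass_comp_eq_zero hS (r.1 • ModuleCat.ofHom f) (by
    rw [Ext.mk₀_smul, Ext.comp_smul]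
    exact hr)
  exact ⟨r, r.2, h.hom, congrArg ModuleCat.Hom.hom hh⟩

end ExtendLinearMap

section TorsionExt

variable {R : Type u} [CommRing R] [IsNoetherianRing R]
  (hR : associatedPrimes R R ⊆ minimalPrimes R)

include hR

lemma isTorsion_ext_of_isTorsion_ext_succ {Y : ModuleCat.{u} R} {i : ℕ}
    (hi : ∀ N : ModuleCat.{u} R, Module.Finite R N →
      Module.IsTorsion R (Abelian.Ext N Y (i + 2)))
    (N : Type u) [AddCommGroup N] [Module R N] [hN : Module.Finite R N] :
    Module.IsTorsion R (Abelian.Ext (ModuleCat.of R N) Y (i + 1)) := by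
  induction hN using IsNoetherianRing.induction_on_isQuotientEquivQuotientPrime R with
  | subsingleton N =>
    exact isTorsion_ext_of_smul_id_eq_zero (one_mem _)
      ((ModuleCat.isZero_of_subsingleton (ModuleCat.of R N)).eq_of_src _ _) _ _
  | quotient N p e =>
    by_cases hp : Disjoint (p.asIdeal : Set R) R⁰
    · obtain ⟨f, hf⟩ := exists_injective_quotient_of_disjoint_nonZeroDivisors hR R hp
      let j : N →ₗ[R] R := f ∘ₗ e.toLinearMap
      have hj : (ModuleCat.shortComplexOfCompEqZero j (LinearMap.range j).mkQ
          j.range_mkQ_comp).ShortExact :=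
        ModuleCat.shortComplex_shortExact _ (LinearMap.exact_map_mkQ_range j)
          (hf.comp e.injective) (Submodule.mkQ_surjective _)
      have : Projective (ModuleCat.of R R) := inferInstance
      have := Ext.subsingleton_of_projective (ModuleCat.of R R) Y i
      refine isTorsion_ext_X₁ hj (fun x ↦ ⟨1, Subsingleton.elim _ _⟩) ?_
      rw [show 1 + (i + 1) = i + 2 by omega]
      exact hi _ (inferInstanceAs (Module.Finite R (R ⧸ LinearMap.range j)))
    · obtain ⟨r, hrp, hr⟩ := Set.not_disjoint_iff.1 hp
      have hrN (x : N) : r • x = 0 := by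
        rw [← e.map_eq_zero_iff, map_smul]
        exact Module.mem_annihilator.1
          ((Ideal.annihilator_quotient (I := p.asIdeal)).symm ▸ hrp) (e x)
      exact isTorsion_ext_of_smul_id_eq_zero hr (ModuleCat.hom_ext (LinearMap.ext hrN)) _ _
  | exact A B C f g hf hg hfg hA hC =>
    exact isTorsion_ext_X₂ (ModuleCat.shortComplex_shortExact
      (ModuleCat.shortComplexOfCompEqZero f g hfg.linearMap_comp_eq_zero) hfg hf hg) hA hC

theorem isTorsion_ext_of_hasInjectiveDimensionLT (Y : ModuleCat.{u} R) (n : ℕ)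
    [HasInjectiveDimensionLT Y n] (N : ModuleCat.{u} R) [Module.Finite R N] (i : ℕ) :
    Module.IsTorsion R (Abelian.Ext N Y (i + 1)) := by
  suffices h : ∀ N : ModuleCat.{u} R, Module.Finite R N →
      Module.IsTorsion R (Abelian.Ext N Y (i + 1)) from h N inferInstance
  refine Nat.decreasingInduction
    (motive := fun m _ ↦ ∀ N : ModuleCat.{u} R, Module.Finite R N →
      Module.IsTorsion R (Abelian.Ext N Y (m + 1)))
    (fun k _ ih N _ ↦ isTorsion_ext_of_isTorsion_ext_succ hR ih N) (fun N _ e ↦ ?_)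
    (le_max_left i n)
  exact ⟨1, by rw [e.eq_zero_of_hasInjectiveDimensionLT n (by omega), smul_zero]⟩

theorem exists_linearMap_apply_ne_zero (W : Type u) [AddCommGroup W] [Module R W]
    [Module.Finite R W] [FaithfulSMul R W] (n : ℕ)
    [HasInjectiveDimensionLT (ModuleCat.of R W) n]
    {L : Type u} [AddCommGroup L] [Module R L] [Module.Finite R L] [Module.IsTorsionFree R L]
    {x : L} (hx : x ≠ 0) : ∃ f : L →ₗ[R] W, f x ≠ 0 := by
  have : Nontrivial (R ∙ x) := Submodule.nontrivial_iff_ne_bot.2 (by simpa)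
  obtain ⟨p, hp⟩ := associatedPrimes.nonempty R (R ∙ x)
  have := hp.isPrime
  have hdisj := disjoint_nonZeroDivisors_of_mem_associatedPrimes hp
  obtain ⟨j, hj⟩ := ((isAssociatedPrime_iff_exists_injective_linearMap p _).1 hp).2
  obtain ⟨g, hg⟩ := exists_injective_quotient_of_disjoint_nonZeroDivisors hR W hdisj
  let a : R ⧸ p →ₗ[R] L := (R ∙ x).subtype ∘ₗ j
  obtain ⟨r, hr, f, hf⟩ := exists_comp_eq_smul_of_isTorsion_ext
    (a := a) ((R ∙ x).injective_subtype.comp hj) (LinearMap.exact_map_mkQ_range a)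
    (Submodule.mkQ_surjective _) (isTorsion_ext_of_hasInjectiveDimensionLT hR _ n _ 0) g
  obtain ⟨s, hs⟩ := Submodule.mem_span_singleton.1 (j 1).2
  refine ⟨f, fun hfx ↦ Set.disjoint_left.1 hdisj (Ideal.Quotient.eq_zero_iff_mem.1 (hg ?_)) hr⟩
  calc g (Ideal.Quotient.mk p r) = g (r • 1) := by
        rw [Algebra.smul_def, mul_one, Ideal.Quotient.algebraMap_eq]
    _ = f (j 1) := (map_smul g r 1).trans (LinearMap.congr_fun hf 1).symm
    _ = g 0 := by rw [← hs, map_smul, hfx, smul_zero, map_zero]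

end TorsionExt

section ExtIntoHom

lemma exists_lcomp_comp_eq {R K P W : Type*} [CommRing R] [AddCommGroup K] [Module R K]
    [AddCommGroup P] [Module R P] [AddCommGroup W] [Module R W]
    (hW : Function.Bijective (LinearMap.lsmul R W)) {ι : K →ₗ[R] P}
    (hι : ∀ c : K →ₗ[R] R, ∃ d : P →ₗ[R] R, d ∘ₗ ι = c) (φ : W →ₗ[R] K →ₗ[R] W) :
    ∃ ψ : W →ₗ[R] P →ₗ[R] W, LinearMap.lcomp R W ι ∘ₗ ψ = φ := by
  let e : R ≃ₗ[R] Module.End R W := LinearEquiv.ofBijective (LinearMap.lsmul R W) hW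
  obtain ⟨d, hd⟩ := hι (e.symm.toLinearMap ∘ₗ φ.flip)
  refine ⟨(LinearMap.lsmul R W ∘ₗ d).flip, ?_⟩
  ext w k
  have hdk : d (ι k) = e.symm (φ.flip k) := LinearMap.congr_fun hd k
  calc d (ι k) • w = e (e.symm (φ.flip k)) w := by rw [hdk]; rfl
    _ = φ w k := by rw [e.apply_symm_apply]; rfl

variable {R : Type u} [CommRing R] {W : Type u} [AddCommGroup W] [Module R W]

lemma subsingleton_ext_linearMap_of_basis {κ : Type*} [Finite κ] {P : Type u} [AddCommGroup P]
    [Module R P] (β : Module.Basis κ R P) (X : ModuleCat.{u} R) (i : ℕ)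
    [Subsingleton (Abelian.Ext X (ModuleCat.of R W) i)] :
    Subsingleton (Abelian.Ext X (ModuleCat.of R (P →ₗ[R] W)) i) := by
  classical
  have := Fintype.ofFinite κ
  have hid : 𝟙 (ModuleCat.of R (P →ₗ[R] W)) = ∑ k, ModuleCat.ofHom (LinearMap.applyₗ (β k)) ≫
      ModuleCat.ofHom (LinearMap.smulRightₗ (M := W) (β.coord k)) := by
    ext1
    refine LinearMap.ext fun h ↦ β.ext fun k ↦ ?_
    simp [Finsupp.single_apply]
  refine subsingleton_of_forall_eq 0 fun e ↦ ?_
  rw [← e.comp_mk₀_id, hid, Ext.mk₀_sum, Ext.comp_sum]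
  refine Finset.sum_eq_zero fun k _ ↦ ?_
  rw [← Ext.mk₀_comp_mk₀,
    ← Ext.comp_assoc (h₁₂ := add_zero i) (h₂₃ := add_zero 0) (h := by omega),
    Subsingleton.elim (e.comp _ _) 0, Ext.zero_comp]

theorem subsingleton_ext_one_linearMap (hW : Function.Bijective (LinearMap.lsmul R W))
    [Subsingleton (Abelian.Ext (ModuleCat.of R W) (ModuleCat.of R W) 1)]
    (M : Type u) [AddCommGroup M] [Module R M] [Module.Finite R M]
    [Subsingleton (Abelian.Ext (ModuleCat.of R M) (ModuleCat.of R R) 1)] :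
    Subsingleton (Abelian.Ext (ModuleCat.of R W) (ModuleCat.of R (M →ₗ[R] W)) 1) := by
  obtain ⟨n, π, hπ⟩ := Module.Finite.exists_fin' R M
  let ι := (LinearMap.ker π).subtype
  have hιπ : Function.Exact ι π := LinearMap.exact_subtype_ker_map π
  let ρ := (LinearMap.lcomp R W ι).rangeRestrict
  have hρ : Function.Exact (LinearMap.lcomp R W π) ρ := by
    rw [LinearMap.exact_iff, LinearMap.ker_rangeRestrict]
    exact (LinearMap.exact_lcomp_of_exact_of_surjective W hιπ hπ).linearMap_ker_eq
  have hS : (ModuleCat.shortComplexOfCompEqZero _ _ hρ.linearMap_comp_eq_zero).ShortExact :=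
    ModuleCat.shortComplex_shortExact _ hρ (LinearMap.lcomp_injective_of_surjective π hπ)
      (LinearMap.surjective_rangeRestrict _)
  have := subsingleton_ext_linearMap_of_basis (W := W) (Pi.basisFun R (Fin n)) (ModuleCat.of R W) 1
  refine subsingleton_ext_one_of_forall_exists_comp_g_eq hS fun φ ↦ ?_
  obtain ⟨ψ, hψ⟩ := exists_lcomp_comp_eq hW
    (exists_comp_eq_of_subsingleton_ext (LinearMap.ker π).injective_subtype hιπ hπ)
    ((LinearMap.range (LinearMap.lcomp R W ι)).subtype ∘ₗ φ.hom)
  exact ⟨ModuleCat.ofHom ψ, ModuleCat.hom_ext <|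
    LinearMap.ext fun w ↦ Subtype.ext (LinearMap.congr_fun hψ w)⟩

end ExtIntoHom

section TensorProduct

lemma lTensor_injective_of_forall_exists_comp_eq {R M F B W : Type*} [CommRing R]
    [AddCommGroup M] [Module R M] [AddCommGroup F] [Module R F] [AddCommGroup B] [Module R B]
    [AddCommGroup W] [Module R W] {a : F →ₗ[R] B}
    (hext : ∀ f : F →ₗ[R] M →ₗ[R] W, ∃ h : B →ₗ[R] M →ₗ[R] W, h ∘ₗ a = f)
    (hsep : ∀ x : M ⊗[R] F, x ≠ 0 → ∃ f : M ⊗[R] F →ₗ[R] W, f x ≠ 0) :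
    Function.Injective (a.lTensor M) := by
  refine (injective_iff_map_eq_zero _).2 fun x hx ↦ of_not_not fun hx₀ ↦ ?_
  obtain ⟨f, hf⟩ := hsep x hx₀
  obtain ⟨h, hh⟩ := hext (TensorProduct.curry f).flip
  have hfac : f = TensorProduct.lift h.flip ∘ₗ a.lTensor M :=
    TensorProduct.ext' fun m y ↦ (LinearMap.congr_fun₂ hh y m).symm
  exact hf (by rw [hfac, LinearMap.comp_apply, hx, map_zero])

theorem isTorsionFree_tensorProduct_of_exact {R : Type u} [CommRing R] [IsNoetherianRing R]
    (hR : associatedPrimes R R ⊆ minimalPrimes R)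
    {ω M F B : Type u} [AddCommGroup ω] [Module R ω] [Module.Finite R ω]
    (hinj : ∃ n, HasInjectiveDimensionLT (ModuleCat.of R ω) n)
    (hω : Function.Bijective (LinearMap.lsmul R ω))
    [Subsingleton (Abelian.Ext (ModuleCat.of R ω) (ModuleCat.of R ω) 1)]
    [AddCommGroup M] [Module R M] [Module.Finite R M]
    [Subsingleton (Abelian.Ext (ModuleCat.of R M) (ModuleCat.of R R) 1)]
    [AddCommGroup F] [Module R F] [Module.Finite R F] [AddCommGroup B] [Module R B]
    {a : F →ₗ[R] B} {b : B →ₗ[R] ω} (ha : Function.Injective a) (hab : Function.Exact a b)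
    (hb : Function.Surjective b) [Module.IsTorsionFree R (M ⊗[R] F)]
    [Module.IsTorsionFree R (M ⊗[R] ω)] : Module.IsTorsionFree R (M ⊗[R] B) := by
  obtain ⟨n, _⟩ := hinj
  have : FaithfulSMul R ω := ⟨fun h ↦ hω.1 (LinearMap.ext h)⟩
  have := subsingleton_ext_one_linearMap hω M
  have hM : Function.Injective (a.lTensor M) := lTensor_injective_of_forall_exists_comp_eq
    (exists_comp_eq_of_subsingleton_ext ha hab hb)
    fun _ ↦ exists_linearMap_apply_ne_zero hR ω n
  exact isTorsionFree_of_exact hM (lTensor_exact M hab hb)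

end TensorProduct

namespace IsCanonicalModule

variable {R : Type} [CommRing R] {ω : Type} [AddCommGroup ω] [Module R ω]

lemma exists_hasInjectiveDimensionLT (hω : IsCanonicalModule R ω) :
    ∃ n, HasInjectiveDimensionLT (ModuleCat.of R ω) n := by
  obtain ⟨n, hn⟩ := hω.2.1
  refine ⟨n + 1, .mk fun i hi Y e ↦ ?_⟩
  obtain ⟨i, rfl⟩ := Nat.exists_eq_add_of_le' (by omega : 1 ≤ i)
  have := subsingleton_abelianExt_of_subsingleton_ext (hn Y (i + 1) (by omega))
  exact Subsingleton.elim _ _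

lemma subsingleton_ext_one (hω : IsCanonicalModule R ω) :
    Subsingleton (Abelian.Ext (ModuleCat.of R ω) (ModuleCat.of R ω) 1) :=
  subsingleton_abelianExt_of_subsingleton_ext (hω.2.2.2 1 le_rfl)

end IsCanonicalModule

theorem stmt_16_general {R : Type u} [CommRing R] [IsNoetherianRing R]
    (hR : associatedPrimes R R ⊆ minimalPrimes R)
    {ω M F G : Type u} [AddCommGroup ω] [Module R ω] [Module.Finite R ω]
    (hinj : ∃ n, HasInjectiveDimensionLT (ModuleCat.of R ω) n)
    (hω : Function.Bijective (LinearMap.lsmul R ω))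
    (hωω : Subsingleton (Abelian.Ext (ModuleCat.of R ω) (ModuleCat.of R ω) 1))
    [AddCommGroup M] [Module R M] [Module.Finite R M]
    (hMR : Subsingleton (Abelian.Ext (ModuleCat.of R M) (ModuleCat.of R R) 1))
    [AddCommGroup F] [Module R F] [Module.Flat R F] [Module.Finite R F]
    [AddCommGroup G] [Module R G] {a : F →ₗ[R] M × G} {b : M × G →ₗ[R] ω}
    (ha : Function.Injective a) (hab : Function.Exact a b) (hb : Function.Surjective b)
    (hM : Submodule.torsion R M = ⊥) (hMω : Submodule.torsion R (M ⊗[R] ω) = ⊥) :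
    Submodule.torsion R (M ⊗[R] M) = ⊥ := by
  rw [torsion_eq_bot_iff_isTorsionFree] at hM hMω ⊢
  have : Module.IsTorsionFree R (M ⊗[R] F) := isTorsionFree_tensorProduct_of_flat
  have : Module.IsTorsionFree R (M ⊗[R] (M × G)) :=
    isTorsionFree_tensorProduct_of_exact hR hinj hω ha hab hb
  have hinl : Function.LeftInverse ((LinearMap.fst R M G).lTensor M)
      ((LinearMap.inl R M G).lTensor M) := fun x ↦ by
    rw [← LinearMap.lTensor_comp_apply, LinearMap.fst_comp_inl, LinearMap.lTensor_id_apply]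
  exact hinl.injective.moduleIsTorsionFree _ fun r x ↦ map_smul _ r x

/-- Let `R` be a one-dimensional Cohen-Macaulay local ring with canonical
module `ω`. Suppose there is a non-split short exact sequence `0 → F → M ⊕ G → ω → 0`
with `F`, `G` finitely generated free, `M` torsion-free and `Ext¹_R(M,R) = 0`.
If `M ⊗_R ω` is torsion-free, then `M ⊗_R M` is torsion-free. -/
theorem stmt_16 (R : Type) [CommRing R] [IsNoetherianRing R] [IsLocalRing R]
    (hdim : ringKrullDim R = 1)
    -- Cohen-Macaulayness: the maximal ideal contains a non zero-divisor
    (hCM : ∃ x ∈ maximalIdeal R, x ∈ nonZeroDivisors R)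
    (ω : Type) [AddCommGroup ω] [Module R ω] (hω : IsCanonicalModule R ω)
    (M : Type) [AddCommGroup M] [Module R M] [Module.Finite R M]
    (F G : Type) [AddCommGroup F] [Module R F] [Module.Free R F] [Module.Finite R F]
    [AddCommGroup G] [Module R G] [Module.Free R G] [Module.Finite R G]
    (a : F →ₗ[R] (M × G)) (b : (M × G) →ₗ[R] ω)
    (ha : Function.Injective a) (hb : Function.Surjective b)
    (hab : Function.Exact a b)
    (hnonsplit : ¬ ∃ s : ω →ₗ[R] (M × G), b ∘ₗ s = LinearMap.id)
    (hMtf : Submodule.torsion R M = ⊥)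
    (hExt : Subsingleton (((_root_.Ext R (ModuleCat.{0} R) 1).obj
      (Opposite.op (ModuleCat.of R M))).obj (ModuleCat.of R R)))
    (htf : Submodule.torsion R (M ⊗[R] ω) = ⊥) :
    Submodule.torsion R (M ⊗[R] M) = ⊥ := by
  have := hω.1
  exact stmt_16_general
    (associatedPrimes_subset_minimalPrimes_of_ringKrullDim_le_one hdim.le hCM)
    hω.exists_hasInjectiveDimensionLT hω.2.2.1 hω.subsingleton_ext_one
    (subsingleton_abelianExt_of_subsingleton_ext hExt) ha hab hb hMtf htf
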